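/- There exists an absolute constant c > 0 such that the following holds. Let n, d, s be positive integers with s ≤ d, let r > 0 and ε > 0, let k_1, …, k_n ∈ ℝ^d satisfy ‖k_i‖₂ ≤ r for all i, and let v_1, …, v_n ∈ ℝ^s. Set t = ⌈c·√s·(log(sn))²·exp(2r²/√d)/ε⌉, assume t ≤ n and that n/t is a power of 2, and set T = log₂(n/t). Then there exists a (finitely supported) probability distribution over tuples (C^0, C^1, …, C^T) of pairwise disjoint subsets of {1,…,n} with |C^l| ≤ t for each 0 ≤ l ≤ T, such that for every q ∈ ℝ^d with ‖q‖₂ ≤ r, with probability at least 1 − 1/n² over the choice of the tuple, ‖ ∑_{i=1}^n exp(⟨k_i, q⟩/√d) v_i − ∑_{l=0}^T 2^l ∑_{i ∈ C^l} exp(⟨k_i, q⟩/√d) v_i ‖₂ ≤ ε · n · exp(−r²/√d) · max_{i ∈ [n]} ‖v_i‖₂. -/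

import Mathlib

open RealInnerProductSpace
open scoped ENNReal

/-! ### A feature map for the exponential kernel -/

/-- The sequence of all monomials of `x`, normalised so that the degree `n` parts of `x` and `y`
have inner product `⟪x, y⟫ ^ n / n!`. -/
noncomputable def expMonomials {d : ℕ} (x : EuclideanSpace ℝ (Fin d)) (n : ℕ) :
    EuclideanSpace ℝ (Fin n → Fin d) :=
  (Real.sqrt n.factorial)⁻¹ • WithLp.toLp 2 fun I => ∏ j, x (I j)

lemma inner_expMonomials {d : ℕ} (x y : EuclideanSpace ℝ (Fin d)) (n : ℕ) :
    ⟪expMonomials x n, expMonomials y n⟫ = ⟪x, y⟫ ^ n / n.factorial := by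
  have h : (Real.sqrt n.factorial)⁻¹ * (Real.sqrt n.factorial)⁻¹ = (n.factorial : ℝ)⁻¹ := by
    rw [← mul_inv, Real.mul_self_sqrt (Nat.cast_nonneg _)]
  rw [expMonomials, expMonomials, real_inner_smul_left, real_inner_smul_right, ← mul_assoc, h,
    div_eq_inv_mul]
  simp only [PiLp.inner_apply, RCLike.inner_apply, conj_trivial, Fintype.sum_pow,
    Finset.prod_mul_distrib]

lemma memℓp_expMonomials {d : ℕ} (x : EuclideanSpace ℝ (Fin d)) :
    Memℓp (expMonomials x) 2 := by
  refine memℓp_gen ?_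
  have h : ∀ n, ‖expMonomials x n‖ ^ (2 : ℝ≥0∞).toReal = ⟪x, x⟫ ^ n / n.factorial := fun n => by
    rw [← inner_expMonomials, real_inner_self_eq_norm_sq]
    simp
  simp only [h]
  exact Real.summable_pow_div_factorial _

/-- A Hilbert space feature map for the exponential kernel. -/
noncomputable def expFeature {d : ℕ} (x : EuclideanSpace ℝ (Fin d)) :
    lp (fun n => EuclideanSpace ℝ (Fin n → Fin d)) 2 :=
  ⟨expMonomials x, memℓp_expMonomials x⟩

lemma inner_expFeature {d : ℕ} (x y : EuclideanSpace ℝ (Fin d)) :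
    ⟪expFeature x, expFeature y⟫ = Real.exp ⟪x, y⟫ := by
  rw [lp.inner_eq_tsum, Real.exp_eq_exp_ℝ, NormedSpace.exp_eq_tsum_div]
  exact tsum_congr fun n => inner_expMonomials x y n

/-! ### Expectations of nonnegative functions under a `PMF` -/

namespace PMF

/-- The expectation of a nonnegative function. -/
noncomputable def lexpect {α : Type*} (μ : PMF α) (g : α → ℝ≥0∞) : ℝ≥0∞ := ∑' a, μ a * g a

variable {α β : Type*}

lemma lexpect_pure (a : α) (g : α → ℝ≥0∞) : (pure a).lexpect g = g a := by
  classical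
  rw [lexpect, tsum_eq_single a]
  · simp
  · intro b hb
    simp [pure_apply, hb]

lemma lexpect_bind (μ : PMF α) (f : α → PMF β) (g : β → ℝ≥0∞) :
    (μ.bind f).lexpect g = μ.lexpect fun a => (f a).lexpect g := by
  simp only [lexpect, bind_apply, ← ENNReal.tsum_mul_right, ← ENNReal.tsum_mul_left]
  rw [ENNReal.tsum_comm]
  simp only [mul_assoc]

lemma lexpect_map (μ : PMF α) (f : α → β) (g : β → ℝ≥0∞) :
    (μ.map f).lexpect g = μ.lexpect (g ∘ f) := by
  rw [← bind_pure_comp, lexpect_bind]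
  simp only [Function.comp_apply, lexpect_pure]
  rfl

lemma lexpect_mono {μ : PMF α} {f g : α → ℝ≥0∞} (h : ∀ a ∈ μ.support, f a ≤ g a) :
    μ.lexpect f ≤ μ.lexpect g := by
  refine ENNReal.tsum_le_tsum fun a => ?_
  by_cases ha : a ∈ μ.support
  · gcongr
    exact h a ha
  · simp [(apply_eq_zero_iff μ a).2 ha]

lemma lexpect_add (μ : PMF α) (f g : α → ℝ≥0∞) :
    (μ.lexpect fun a => f a + g a) = μ.lexpect f + μ.lexpect g := by
  simp only [lexpect, mul_add, ENNReal.tsum_add]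

lemma lexpect_const_mul (μ : PMF α) (c : ℝ≥0∞) (f : α → ℝ≥0∞) :
    (μ.lexpect fun a => c * f a) = c * μ.lexpect f := by
  simp only [lexpect, mul_left_comm _ c, ENNReal.tsum_mul_left]

lemma lexpect_const (μ : PMF α) (c : ℝ≥0∞) : (μ.lexpect fun _ => c) = c := by
  rw [lexpect, ENNReal.tsum_mul_right, tsum_coe, one_mul]

lemma lexpect_indicator_one (μ : PMF α) (s : Set α) :
    μ.lexpect (s.indicator 1) = μ.toOuterMeasure s := by
  classical
  rw [toOuterMeasure_apply, lexpect]
  refine tsum_congr fun a => ?_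
  by_cases ha : a ∈ s <;> simp [ha]

lemma one_sub_toOuterMeasure_compl_le (μ : PMF α) (s : Set α) :
    1 - μ.toOuterMeasure sᶜ ≤ μ.toOuterMeasure s := by
  rw [tsub_le_iff_right, ← lexpect_indicator_one, ← lexpect_indicator_one, ← lexpect_add]
  conv_lhs => rw [← lexpect_const μ 1]
  refine lexpect_mono fun a _ => ?_
  by_cases ha : a ∈ s <;> simp [ha]

/-- A coin showing `true` with probability `p`. -/
noncomputable def coin (p : Set.Icc (0 : ℝ) 1) : PMF Bool :=
  ofFintype (fun b => ENNReal.ofReal (if b then p else 1 - p)) <| by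
    have h1 : 0 ≤ 1 - (p : ℝ) := sub_nonneg.2 p.2.2
    simp [← ENNReal.ofReal_add p.2.1 h1]

lemma lexpect_coin (p : Set.Icc (0 : ℝ) 1) (g : Bool → ℝ≥0∞) :
    (coin p).lexpect g =
      ENNReal.ofReal p * g true + ENNReal.ofReal (1 - p) * g false := by
  simp [lexpect, coin]

end PMF

/-- Hoeffding's lemma for a biased sign of mean `b`. -/
lemma biased_sign_mgf_le {b : ℝ} (hb : |b| ≤ 1) (a : ℝ) :
    (1 + b) / 2 * Real.exp a + (1 - b) / 2 * Real.exp (-a) ≤ Real.exp (b * a + a ^ 2 / 2) := by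
  obtain ⟨h1, h2⟩ := abs_le.1 hb
  let μ := (PMF.coin ⟨(1 + b) / 2, by linarith, by linarith⟩).toMeasure
  let X : Bool → ℝ := fun x => if x then 1 else -1
  have hμ : ∀ f : Bool → ℝ, ∫ x, f x ∂μ = (1 + b) / 2 * f true + (1 - b) / 2 * f false := by
    intro f
    rw [PMF.integral_eq_sum, Fintype.sum_bool]
    simp only [PMF.coin, PMF.ofFintype_apply, smul_eq_mul, if_true, Bool.false_eq_true, if_false]
    rw [ENNReal.toReal_ofReal (by linarith), ENNReal.toReal_ofReal (by linarith)]
    ring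
  have h := (ProbabilityTheory.hasSubgaussianMGF_of_mem_Icc (X := X) (μ := μ) (a := -1) (b := 1)
    (measurable_of_finite X).aemeasurable (.of_forall fun x => by cases x <;> simp [X])).mgf_le a
  have hX : ∫ x, X x ∂μ = b := by
    rw [hμ]
    simp [X]
    ring
  rw [ProbabilityTheory.mgf, hX, hμ] at h
  have hc : (((‖(1 : ℝ) - -1‖₊ / 2) ^ 2 : NNReal) : ℝ) = 1 := by norm_num
  rw [hc, one_mul] at h
  simp only [X, if_true, Bool.false_eq_true, if_false] at h
  calc _ = ((1 + b) / 2 * Real.exp (a * (1 - b)) + (1 - b) / 2 * Real.exp (a * (-1 - b)))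
        * Real.exp (b * a) := by
        rw [add_mul, mul_assoc, mul_assoc, ← Real.exp_add, ← Real.exp_add]
        ring_nf
    _ ≤ Real.exp (a ^ 2 / 2) * Real.exp (b * a) := by gcongr
    _ = _ := by rw [← Real.exp_add, add_comm]

/-! ### The self-balancing walk -/

section Walk

variable {α β E : Type*} [NormedAddCommGroup E] [InnerProductSpace ℝ E]

/-- The vector `w`, restricted to the event that the outcome is not `none`, is subgaussian with
variance proxy `c` in every direction. -/
def IsSubgaussianOnSome (c : ℝ) (μ : PMF (Option α)) (w : α → E) : Prop :=
  ∀ θ : E, (μ.lexpect fun o => o.elim 0 fun a => ENNReal.ofReal (Real.exp ⟪w a, θ⟫)) ≤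
    ENNReal.ofReal (Real.exp (c / 2 * ‖θ‖ ^ 2))

/-- The tail bound `ℙ(c < |X|) ≤ tailBound c` for a subgaussian variable with variance proxy `c`. -/
noncomputable def tailBound (c : ℝ) : ℝ≥0∞ := ENNReal.ofReal (2 * Real.exp (-c / 2))

open Classical in
lemma IsSubgaussianOnSome.tail_le {c : ℝ} (hc : 0 ≤ c) {μ : PMF (Option α)} {w : α → E}
    (h : IsSubgaussianOnSome c μ w) {θ : E} (hθ : ‖θ‖ ≤ 1) :
    (μ.lexpect fun o => o.elim 0 fun a => if c < |⟪w a, θ⟫| then 1 else 0) ≤ tailBound c := by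
  have key : ∀ y : ℝ, c < |y| → 1 ≤ Real.exp (-c) * (Real.exp y + Real.exp (-y)) := by
    intro y hy
    rw [← Real.exp_zero, ← neg_add_cancel c, Real.exp_add]
    rcases lt_abs.1 hy with hy | hy
    · have := Real.exp_pos (-y)
      gcongr
      linarith [Real.exp_le_exp.2 hy.le]
    · have := Real.exp_pos y
      gcongr
      linarith [Real.exp_le_exp.2 hy.le]
  have hsq : ‖θ‖ ^ 2 ≤ 1 := pow_le_one₀ (norm_nonneg _) hθ
  have hexp : Real.exp (c / 2 * ‖θ‖ ^ 2) ≤ Real.exp (c / 2) :=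
    Real.exp_le_exp.2 (mul_le_of_le_one_right (by positivity) hsq)
  have h1 := h θ
  have h2 := h (-θ)
  rw [norm_neg] at h2
  calc _ ≤ μ.lexpect fun o => ENNReal.ofReal (Real.exp (-c)) *
        ((o.elim 0 fun a => ENNReal.ofReal (Real.exp ⟪w a, θ⟫)) +
          (o.elim 0 fun a => ENNReal.ofReal (Real.exp ⟪w a, -θ⟫))) := by
        refine PMF.lexpect_mono fun o _ => ?_
        cases o with
        | none => simp
        | some a =>
          simp only [Option.elim_some]
          split_ifs with hy
          · rw [← ENNReal.ofReal_add (by positivity) (by positivity),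
              ← ENNReal.ofReal_mul (by positivity), inner_neg_right, ENNReal.one_le_ofReal]
            exact key _ hy
          · exact zero_le
    _ ≤ ENNReal.ofReal (Real.exp (-c)) * (ENNReal.ofReal (Real.exp (c / 2)) +
          ENNReal.ofReal (Real.exp (c / 2))) := by
        rw [PMF.lexpect_const_mul, PMF.lexpect_add]
        gcongr
        · exact h1.trans (ENNReal.ofReal_le_ofReal hexp)
        · exact h2.trans (ENNReal.ofReal_le_ofReal hexp)
    _ = tailBound c := by
        rw [tailBound, ← ENNReal.ofReal_add (by positivity) (by positivity),
          ← ENNReal.ofReal_mul (by positivity), ← two_mul, mul_left_comm, ← Real.exp_add]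
        ring_nf

lemma PMF.apply_none_eq_lexpect (μ : PMF (Option α)) :
    μ none = μ.lexpect fun o => o.elim 1 fun _ => 0 := by
  rw [PMF.lexpect, tsum_eq_single none]
  · simp
  · rintro (_ | a) h
    · exact absurd rfl h
    · simp

open Classical in
/-- One step of the self-balancing walk at `w`, choosing between `f` (moving by `-x`) and `g`
(moving by `x`) with a bias against `⟪w, x⟫`, and giving up if `⟪w, x⟫` is too large. -/
noncomputable def walkStep (c : ℝ) (hc : 1 ≤ c) (w x : E) (f g : β) : PMF (Option β) :=
  if h : |⟪w, x⟫| ≤ c then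
    (PMF.coin ⟨(1 + ⟪w, x⟫ / c) / 2, by
      have hc0 : 0 < c := by linarith
      have := abs_le.1 h
      have h1 : -1 ≤ ⟪w, x⟫ / c := by rw [le_div_iff₀ hc0]; linarith
      have h2 : ⟪w, x⟫ / c ≤ 1 := by rw [div_le_iff₀ hc0]; linarith
      constructor <;> linarith⟩).map fun b => some (if b then f else g)
  else PMF.pure none

lemma lexpect_walkStep {c : ℝ} (hc : 1 ≤ c) {w x : E} (h : |⟪w, x⟫| ≤ c) (f g : β)
    (F : Option β → ℝ≥0∞) :
    (walkStep c hc w x f g).lexpect F = ENNReal.ofReal ((1 + ⟪w, x⟫ / c) / 2) * F (some f) +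
      ENNReal.ofReal (1 - (1 + ⟪w, x⟫ / c) / 2) * F (some g) := by
  rw [walkStep, dif_pos h, PMF.lexpect_map, PMF.lexpect_coin]
  simp

lemma walkStep_of_lt {c : ℝ} (hc : 1 ≤ c) {w x : E} (h : c < |⟪w, x⟫|) (f g : β) :
    walkStep c hc w x f g = PMF.pure none := by
  rw [walkStep, dif_neg (not_le.2 h)]

lemma eq_or_eq_of_mem_support_walkStep {c : ℝ} (hc : 1 ≤ c) {w x : E} {f g b : β}
    (hb : some b ∈ (walkStep c hc w x f g).support) : b = f ∨ b = g := by
  rw [walkStep] at hb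
  split_ifs at hb with h
  · simp only [PMF.mem_support_map_iff] at hb
    obtain ⟨x, -, hx⟩ := hb
    cases x <;> simp_all
  · simp at hb

lemma lexpect_walkStep_exp_le {c : ℝ} (hc : 1 ≤ c) (w : E) {x : E} {f g : β} {w' : β → E}
    (hf : w' f = w - x) (hg : w' g = w + x) (θ : E) :
    ((walkStep c hc w x f g).lexpect fun o =>
        o.elim 0 fun a => ENNReal.ofReal (Real.exp ⟪w' a, θ⟫)) ≤
      ENNReal.ofReal (Real.exp (⟪x, θ⟫ ^ 2 / 2)) *
        ENNReal.ofReal (Real.exp ⟪w, θ - (⟪x, θ⟫ / c) • x⟫) := by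
  rcases le_or_gt |⟪w, x⟫| c with h | h
  · have hc0 : 0 < c := by linarith
    have hb : |⟪w, x⟫ / c| ≤ 1 := by rwa [abs_div, abs_of_pos hc0, div_le_one hc0]
    obtain ⟨h1, h2⟩ := abs_le.1 hb
    rw [lexpect_walkStep hc h]
    simp only [Option.elim_some]
    rw [← ENNReal.ofReal_mul (by linarith), ← ENNReal.ofReal_mul (by linarith),
      ← ENNReal.ofReal_mul (by positivity),
      ← ENNReal.ofReal_add (mul_nonneg (by linarith) (Real.exp_pos _).le)
        (mul_nonneg (by linarith) (Real.exp_pos _).le)]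
    refine ENNReal.ofReal_le_ofReal ?_
    rw [hf, hg, inner_sub_left, inner_add_left, sub_eq_add_neg, Real.exp_add, Real.exp_add]
    calc _ = Real.exp ⟪w, θ⟫ * ((1 + ⟪w, x⟫ / c) / 2 * Real.exp (-⟪x, θ⟫) +
          (1 - ⟪w, x⟫ / c) / 2 * Real.exp (- -⟪x, θ⟫)) := by rw [neg_neg]; ring
      _ ≤ Real.exp ⟪w, θ⟫ * Real.exp (⟪w, x⟫ / c * -⟪x, θ⟫ + (-⟪x, θ⟫) ^ 2 / 2) := by
          gcongr
          exact biased_sign_mgf_le hb _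
      _ = _ := by
          rw [← Real.exp_add, ← Real.exp_add, inner_sub_right, real_inner_smul_right]
          ring_nf
  · rw [walkStep_of_lt hc h, PMF.lexpect_pure]
    simp

lemma exp_mul_exp_norm_sub_le {c : ℝ} (hc : 1 ≤ c) {x : E} (hx : ‖x‖ ≤ 1) (θ : E) :
    Real.exp (⟪x, θ⟫ ^ 2 / 2) * Real.exp (c / 2 * ‖θ - (⟪x, θ⟫ / c) • x‖ ^ 2) ≤
      Real.exp (c / 2 * ‖θ‖ ^ 2) := by
  have hc0 : 0 < c := by linarith
  rw [← Real.exp_add, Real.exp_le_exp, norm_sub_sq_real, real_inner_smul_right, norm_smul,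
    real_inner_comm x θ, Real.norm_eq_abs, mul_pow, sq_abs]
  have hsq : ‖x‖ ^ 2 ≤ 1 := pow_le_one₀ (norm_nonneg _) hx
  have h : ‖x‖ ^ 2 / c ≤ 1 := by rw [div_le_one hc0]; linarith
  have key : c / 2 * (‖θ‖ ^ 2 - 2 * (⟪x, θ⟫ / c * ⟪x, θ⟫) + (⟪x, θ⟫ / c) ^ 2 * ‖x‖ ^ 2) =
      c / 2 * ‖θ‖ ^ 2 - ⟪x, θ⟫ ^ 2 + ⟪x, θ⟫ ^ 2 / 2 * (‖x‖ ^ 2 / c) := by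
    field_simp
  rw [key]
  nlinarith [mul_le_mul_of_nonneg_left h (by positivity : 0 ≤ ⟪x, θ⟫ ^ 2 / 2)]

lemma IsSubgaussianOnSome.exists_step {c : ℝ} (hc : 1 ≤ c) {μ : PMF (Option α)} {w : α → E}
    (h : IsSubgaussianOnSome c μ w) {x : E} (hx : ‖x‖ ≤ 1) {f g : α → β} {w' : β → E}
    (hf : ∀ a, some a ∈ μ.support → w' (f a) = w a - x)
    (hg : ∀ a, some a ∈ μ.support → w' (g a) = w a + x) :
    ∃ ν : PMF (Option β), IsSubgaussianOnSome c ν w' ∧ ν none ≤ μ none + tailBound c ∧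
      ∀ b, some b ∈ ν.support → ∃ a, some a ∈ μ.support ∧ (b = f a ∨ b = g a) := by
  classical
  refine ⟨μ.bind fun o => o.elim (PMF.pure none) fun a => walkStep c hc (w a) x (f a) (g a),
    fun θ => ?_, ?_, fun b hb => ?_⟩
  · rw [PMF.lexpect_bind]
    calc _ ≤ μ.lexpect fun o => ENNReal.ofReal (Real.exp (⟪x, θ⟫ ^ 2 / 2)) *
          o.elim 0 fun a => ENNReal.ofReal (Real.exp ⟪w a, θ - (⟪x, θ⟫ / c) • x⟫) := by
          refine PMF.lexpect_mono fun o ho => ?_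
          cases o with
          | none => simp [PMF.lexpect_pure]
          | some a => exact lexpect_walkStep_exp_le hc (w a) (hf a ho) (hg a ho) θ
      _ ≤ ENNReal.ofReal (Real.exp (⟪x, θ⟫ ^ 2 / 2)) *
          ENNReal.ofReal (Real.exp (c / 2 * ‖θ - (⟪x, θ⟫ / c) • x‖ ^ 2)) := by
          rw [PMF.lexpect_const_mul]
          gcongr
          exact h _
      _ ≤ _ := by
          rw [← ENNReal.ofReal_mul (by positivity)]
          exact ENNReal.ofReal_le_ofReal (exp_mul_exp_norm_sub_le hc hx θ)
  · rw [PMF.apply_none_eq_lexpect, PMF.lexpect_bind, PMF.apply_none_eq_lexpect μ]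
    refine le_trans ?_ (add_le_add_right (h.tail_le (by linarith) hx) _)
    rw [← PMF.lexpect_add]
    refine PMF.lexpect_mono fun o _ => ?_
    cases o with
    | none => simp [PMF.lexpect_pure]
    | some a =>
      simp only [Option.elim_some]
      split_ifs with hy
      · rw [walkStep_of_lt hc hy, PMF.lexpect_pure]
        simp
      · rw [lexpect_walkStep hc (not_lt.1 hy)]
        simp
  · rw [PMF.mem_support_bind_iff] at hb
    obtain ⟨_ | a, ha, hb⟩ := hb
    · simp at hb
    · exact ⟨a, ha, eq_or_eq_of_mem_support_walkStep hc hb⟩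

end Walk

/-! ### Halving and iterated halving -/

section Thinning

variable {ι E : Type*} [NormedAddCommGroup E] [InnerProductSpace ℝ E]

/-- The error of estimating the sum of `u` over `A` by `W` times the sum over `B`. -/
def thinningError (u : ι → E) (W : ℝ) (A B : Finset ι) : E := ∑ i ∈ A, u i - W • ∑ i ∈ B, u i

/-- Composing two thinnings, the error of the second is scaled by the weight of the first. -/
lemma thinningError_mul (u : ι → E) (W W' : ℝ) (A A' B : Finset ι) :
    thinningError u (W * W') A B = thinningError u W A A' + W • thinningError u W' A' B := by
  simp only [thinningError, smul_sub, mul_smul]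
  abel

lemma exists_halving_option {u : ι → E} (hu : ∀ i j, ‖u i - u j‖ ≤ 1) {c : ℝ}
    (hc : 1 ≤ c) (m : ℕ) (A : Finset ι) (hA : A.card = 2 * m) :
    ∃ μ : PMF (Option (Finset ι)), IsSubgaussianOnSome c μ (thinningError u 2 A) ∧
      μ none ≤ m * tailBound c ∧ ∀ B, some B ∈ μ.support → B ⊆ A ∧ B.card = m := by
  classical
  induction m generalizing A with
  | zero =>
    obtain rfl : A = ∅ := by simpa using hA
    refine ⟨PMF.pure (some ∅), fun θ => ?_, by simp, fun B hB => ?_⟩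
    · rw [PMF.lexpect_pure]
      refine ENNReal.ofReal_le_ofReal (Real.exp_le_exp.2 ?_)
      simp only [thinningError, Finset.sum_empty, smul_zero, sub_zero, inner_zero_left]
      positivity
    · simp at hB
      simp [hB]
  | succ m ih =>
    obtain ⟨p, A₁, hp, rfl, hA₁⟩ := Finset.card_eq_succ.1 (show A.card = (2 * m + 1) + 1 by omega)
    obtain ⟨q, A', hq, rfl, hA'⟩ := Finset.card_eq_succ.1 hA₁
    obtain ⟨μ, hμ, hnone, hsupp⟩ := ih A' hA'
    have hsum : ∑ i ∈ insert p (insert q A'), u i = u p + (u q + ∑ i ∈ A', u i) := by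
      rw [Finset.sum_insert hp, Finset.sum_insert hq]
    have hpB : ∀ B, some B ∈ μ.support → p ∉ B := fun B hB h =>
      hp (Finset.mem_insert_of_mem ((hsupp B hB).1 h))
    have hqB : ∀ B, some B ∈ μ.support → q ∉ B := fun B hB h => hq ((hsupp B hB).1 h)
    obtain ⟨ν, hν, hνnone, hνsupp⟩ := hμ.exists_step hc (hu p q) (f := insert p) (g := insert q)
      (w' := thinningError u 2 (insert p (insert q A')))
      (fun B hB => by
        rw [thinningError, thinningError, hsum, Finset.sum_insert (hpB B hB)]
        module)
      (fun B hB => by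
        rw [thinningError, thinningError, hsum, Finset.sum_insert (hqB B hB)]
        module)
    refine ⟨ν, hν, hνnone.trans ?_, fun B hB => ?_⟩
    · push_cast
      rw [add_mul, one_mul]
      gcongr
    · obtain ⟨B', hB', rfl | rfl⟩ := hνsupp B hB
      · exact ⟨Finset.insert_subset_insert _ ((hsupp B' hB').1.trans (Finset.subset_insert _ _)),
          by rw [Finset.card_insert_of_notMem (hpB B' hB'), (hsupp B' hB').2]⟩
      · exact ⟨(Finset.insert_subset_insert _ (hsupp B' hB').1).trans (Finset.subset_insert _ _),
          by rw [Finset.card_insert_of_notMem (hqB B' hB'), (hsupp B' hB').2]⟩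

lemma exists_halving {u : ι → E} (hu : ∀ i j, ‖u i - u j‖ ≤ 1) {c : ℝ}
    (hc : 1 ≤ c) (m : ℕ) (A : Finset ι) (hA : A.card = 2 * m) :
    ∃ μ : PMF (Finset ι), (∀ B ∈ μ.support, B ⊆ A ∧ B.card = m) ∧ ∀ θ : E, ‖θ‖ ≤ 1 →
      μ.toOuterMeasure {B | c < |⟪thinningError u 2 A B, θ⟫|} ≤ (m + 1) * tailBound c := by
  classical
  obtain ⟨μ, hμ, hnone, hsupp⟩ := exists_halving_option hu hc m A hA
  obtain ⟨B₀, hB₀⟩ := Finset.exists_subset_card_eq (show m ≤ A.card by omega)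
  refine ⟨μ.map fun o => o.getD B₀, fun B hB => ?_, fun θ hθ => ?_⟩
  · obtain ⟨_ | B', hB', rfl⟩ := (PMF.mem_support_map_iff _ _ _).1 hB
    · exact hB₀
    · exact hsupp B' hB'
  · rw [← PMF.lexpect_indicator_one, PMF.lexpect_map, add_mul, one_mul]
    refine le_trans ?_ (add_le_add hnone (hμ.tail_le (by linarith) hθ))
    rw [PMF.apply_none_eq_lexpect, ← PMF.lexpect_add]
    refine PMF.lexpect_mono fun o _ => ?_
    cases o with
    | none =>
      simp only [Function.comp_apply, Option.getD_none, Option.elim_none, add_zero]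
      exact Set.indicator_apply_le' (fun _ => le_rfl) (fun _ => zero_le)
    | some B => simp [Set.indicator_apply]

lemma exists_thinning {u : ι → E} (hu : ∀ i j, ‖u i - u j‖ ≤ 1) {c : ℝ}
    (hc : 1 ≤ c) (n t T : ℕ) (A : Finset ι) (hA : A.card = t * 2 ^ T) (hn : A.card ≤ n) :
    ∃ μ : PMF (Finset ι), (∀ B ∈ μ.support, B.card = t) ∧ ∀ θ : E, ‖θ‖ ≤ 1 →
      μ.toOuterMeasure {B | (2 ^ T - 1) * c < |⟪thinningError u (2 ^ T) A B, θ⟫|} ≤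
        T * (n + 1) * tailBound c := by
  classical
  induction T generalizing A with
  | zero =>
    refine ⟨PMF.pure A, fun B hB => ?_, fun θ _ => ?_⟩
    · simp at hB
      simpa [hB] using hA
    · rw [← PMF.lexpect_indicator_one, PMF.lexpect_pure]
      simp [thinningError]
  | succ T ih =>
    have hcard : A.card = 2 * (t * 2 ^ T) := by rw [hA]; ring
    obtain ⟨μ, hμ, htail⟩ := exists_halving hu hc (t * 2 ^ T) A hcard
    have : Nonempty (PMF (Finset ι)) := ⟨PMF.pure ∅⟩
    choose! ν hν hνtail using ih
    have hm : t * 2 ^ T ≤ n := by omega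
    refine ⟨μ.bind ν, fun B hB => ?_, fun θ hθ => ?_⟩
    · obtain ⟨A', hA', hB⟩ := (PMF.mem_support_bind_iff _ _ _).1 hB
      have h := (hμ A' hA').2
      exact hν A' h (h.trans_le hm) B hB
    · rw [← PMF.lexpect_indicator_one, PMF.lexpect_bind]
      calc _ ≤ μ.lexpect fun A' => {B | c < |⟪thinningError u 2 A B, θ⟫|}.indicator 1 A' +
            T * (n + 1) * tailBound c := by
            refine PMF.lexpect_mono fun A' hA' => ?_
            have h := (hμ A' hA').2
            rcases lt_or_ge c |⟪thinningError u 2 A A', θ⟫| with h1 | h1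
            · rw [Set.indicator_of_mem (by exact h1)]
              refine le_add_right ?_
              rw [← PMF.lexpect_const (ν A') ((1 : Finset ι → ℝ≥0∞) A')]
              exact PMF.lexpect_mono fun B _ =>
                Set.indicator_apply_le' (fun _ => le_rfl) (fun _ => zero_le)
            · refine le_add_left ?_
              rw [PMF.lexpect_indicator_one]
              refine le_trans ((ν A').toOuterMeasure.mono fun B hB => ?_)
                (hνtail A' h (h.trans_le hm) θ hθ)
              simp only [Set.mem_ofPred_eq] at hB ⊢
              rw [pow_succ', thinningError_mul u 2 _ A A' B, inner_add_left,
                real_inner_smul_left] at hB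
              have h2 := hB.trans_le (abs_add_le _ _)
              rw [abs_mul, abs_two] at h2
              linarith
        _ ≤ (t * 2 ^ T + 1) * tailBound c + T * (n + 1) * tailBound c := by
            rw [PMF.lexpect_add, PMF.lexpect_const, PMF.lexpect_indicator_one]
            gcongr
            exact_mod_cast htail θ hθ
        _ ≤ (n + 1) * tailBound c + T * (n + 1) * tailBound c := by
            gcongr
            exact_mod_cast hm
        _ = _ := by push_cast; ring

end Thinning

/-! ### Thinning key-value pairs -/

lemma norm_expFeature_smul_le {d : ℕ} {r : ℝ} {x : EuclideanSpace ℝ (Fin d)} (hx : ‖x‖ ≤ r) :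
    ‖expFeature ((Real.sqrt (Real.sqrt d))⁻¹ • x)‖ ≤ Real.exp (r ^ 2 / Real.sqrt d / 2) := by
  refine (sq_le_sq₀ (norm_nonneg _) (Real.exp_pos _).le).1 ?_
  rw [← real_inner_self_eq_norm_sq, inner_expFeature, real_inner_self_eq_norm_sq, norm_smul,
    ← Real.exp_nat_mul, mul_pow, norm_inv, inv_pow, Real.norm_eq_abs, sq_abs,
    Real.sq_sqrt (Real.sqrt_nonneg _), Real.exp_le_exp]
  have h : ‖x‖ ^ 2 ≤ r ^ 2 := by gcongr
  calc _ ≤ (Real.sqrt d)⁻¹ * r ^ 2 := by gcongr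
    _ = _ := by push_cast; ring

lemma inner_expFeature_smul {d : ℕ} (x y : EuclideanSpace ℝ (Fin d)) :
    ⟪expFeature ((Real.sqrt (Real.sqrt d))⁻¹ • x), expFeature ((Real.sqrt (Real.sqrt d))⁻¹ • y)⟫ =
      Real.exp (⟪x, y⟫ / Real.sqrt d) := by
  rw [inner_expFeature, real_inner_smul_left, real_inner_smul_right, ← mul_assoc, ← mul_inv,
    Real.mul_self_sqrt (Real.sqrt_nonneg _), inv_mul_eq_div]

lemma EuclideanSpace.norm_le_sqrt_mul_of_abs_le {s : ℕ} {x : EuclideanSpace ℝ (Fin s)} {M : ℝ}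
    (hM : 0 ≤ M) (h : ∀ j, |x j| ≤ M) : ‖x‖ ≤ Real.sqrt s * M := by
  rw [EuclideanSpace.norm_eq, ← Real.sqrt_sq hM, ← Real.sqrt_mul (Nat.cast_nonneg _)]
  refine Real.sqrt_le_sqrt ?_
  calc ∑ j, ‖x j‖ ^ 2 ≤ ∑ _j : Fin s, M ^ 2 :=
        Finset.sum_le_sum fun j _ => by gcongr; exact h j
    _ = _ := by simp

open TensorProduct in
lemma exists_keyValue_thinning {n d s t T : ℕ} (hn : n = t * 2 ^ T) {r c : ℝ} (hc : 1 ≤ c)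
    {k : Fin n → EuclideanSpace ℝ (Fin d)} (hk : ∀ i, ‖k i‖ ≤ r)
    {v : Fin n → EuclideanSpace ℝ (Fin s)} (hv : ∀ i, ‖v i‖ ≤ 1) :
    ∃ μ : PMF (Finset (Fin n)), (∀ B ∈ μ.support, B.card = t) ∧
      ∀ q : EuclideanSpace ℝ (Fin d), ‖q‖ ≤ r →
        μ.toOuterMeasure {B | Real.sqrt s * (2 * Real.exp (r ^ 2 / Real.sqrt d) * 2 ^ T * c) <
          ‖thinningError (fun i => Real.exp (⟪k i, q⟫ / Real.sqrt d) • v i) (2 ^ T)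
            Finset.univ B‖} ≤ s * (T * (n + 1) * tailBound c) := by
  set ρ := Real.exp (r ^ 2 / Real.sqrt d / 2) with hρ
  have hρ0 : 0 < ρ := Real.exp_pos _
  have hρsq : Real.exp (r ^ 2 / Real.sqrt d) = ρ ^ 2 := by
    rw [hρ, ← Real.exp_nat_mul]
    push_cast
    ring_nf
  let φ : EuclideanSpace ℝ (Fin d) → lp (fun n => EuclideanSpace ℝ (Fin n → Fin d)) 2 :=
    fun x => ρ⁻¹ • expFeature ((Real.sqrt (Real.sqrt d))⁻¹ • x)
  have hφ : ∀ x, ‖x‖ ≤ r → ‖φ x‖ ≤ 1 := fun x hx => by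
    rw [norm_smul, norm_inv, Real.norm_of_nonneg hρ0.le, inv_mul_le_one₀ hρ0]
    exact norm_expFeature_smul_le hx
  have hφinner : ∀ x y, ⟪φ x, φ y⟫ = (ρ ^ 2)⁻¹ * Real.exp (⟪x, y⟫ / Real.sqrt d) := fun x y => by
    rw [real_inner_smul_left, real_inner_smul_right, inner_expFeature_smul]
    ring
  let u : Fin n → lp (fun n => EuclideanSpace ℝ (Fin n → Fin d)) 2 ⊗[ℝ] EuclideanSpace ℝ (Fin s) :=
    fun i => ((2 : ℝ)⁻¹ • φ (k i)) ⊗ₜ[ℝ] v i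
  have hu : ∀ i, ‖u i‖ ≤ 1 / 2 := fun i => by
    rw [TensorProduct.norm_tmul, norm_smul, mul_assoc]
    have := mul_le_one₀ (hφ _ (hk i)) (norm_nonneg _) (hv i)
    norm_num
    linarith
  have hu' : ∀ i j, ‖u i - u j‖ ≤ 1 := fun i j =>
    (norm_sub_le _ _).trans (by linarith [hu i, hu j])
  obtain ⟨μ, hμ, htail⟩ := exists_thinning hu' hc n t T Finset.univ (by simpa using hn) (by simp)
  refine ⟨μ, hμ, fun q hq => ?_⟩
  let θ : Fin s → lp (fun n => EuclideanSpace ℝ (Fin n → Fin d)) 2 ⊗[ℝ] EuclideanSpace ℝ (Fin s) :=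
    fun j => φ q ⊗ₜ[ℝ] EuclideanSpace.single j 1
  have hθ : ∀ j, ‖θ j‖ ≤ 1 := fun j => by
    rw [TensorProduct.norm_tmul]
    simpa using hφ q hq
  have hinner : ∀ i j, ⟪u i, θ j⟫ =
      (2 * ρ ^ 2)⁻¹ * (Real.exp (⟪k i, q⟫ / Real.sqrt d) * v i j) := fun i j => by
    simp only [u, θ]
    rw [TensorProduct.inner_tmul, real_inner_smul_left, hφinner,
      EuclideanSpace.inner_single_right]
    simp only [conj_trivial, one_mul]
    ring
  have herr : ∀ B j, ⟪thinningError u (2 ^ T) Finset.univ B, θ j⟫ = (2 * ρ ^ 2)⁻¹ *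
      thinningError (fun i => Real.exp (⟪k i, q⟫ / Real.sqrt d) • v i) (2 ^ T)
        Finset.univ B j := fun B j => by
    simp only [thinningError, inner_sub_left, real_inner_smul_left, sum_inner, hinner,
      PiLp.sub_apply, PiLp.smul_apply, WithLp.ofLp_sum, Finset.sum_apply, smul_eq_mul,
      ← Finset.mul_sum]
    ring
  calc _ ≤ μ.toOuterMeasure (⋃ j, {B | (2 ^ T - 1) * c <
        |⟪thinningError u (2 ^ T) Finset.univ B, θ j⟫|}) := by
        refine μ.toOuterMeasure.mono fun B hB => ?_
        by_contra hB'
        simp only [Set.mem_iUnion, Set.mem_ofPred_eq, not_exists, not_lt] at hB hB'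
        refine absurd hB (not_lt.2 (EuclideanSpace.norm_le_sqrt_mul_of_abs_le (by positivity) ?_))
        intro j
        have h := hB' j
        rw [herr, abs_mul, abs_of_pos (by positivity), inv_mul_le_iff₀ (by positivity)] at h
        refine h.trans ?_
        rw [hρsq, mul_assoc _ _ c]
        gcongr
        linarith
    _ ≤ ∑ j : Fin s, (T * (n + 1) * tailBound c : ℝ≥0∞) :=
        (MeasureTheory.measure_iUnion_fintype_le _ _).trans
          (Finset.sum_le_sum fun j _ => htail (θ j) (hθ j))
    _ = _ := by simp

lemma mul_tailBound_le {n s T : ℕ} (hn : 2 ≤ n) (hs : 0 < s) (hT : T ≤ n) :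
    (s * (T * (n + 1) * tailBound (12 * Real.log (s * n))) : ℝ≥0∞) ≤
      ENNReal.ofReal (1 / (n : ℝ) ^ 2) := by
  have hn' : (2 : ℝ) ≤ n := by exact_mod_cast hn
  have hs' : (1 : ℝ) ≤ s := by exact_mod_cast hs
  have hT' : (T : ℝ) ≤ n := by exact_mod_cast hT
  have hx : (0 : ℝ) < s * n := by positivity
  have hexp : Real.exp (-(12 * Real.log (s * n)) / 2) = ((s * n : ℝ) ^ 6)⁻¹ := by
    rw [show -(12 * Real.log (s * n)) / 2 = -((6 : ℕ) * Real.log (s * n)) by push_cast; ring,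
      Real.exp_neg, Real.exp_nat_mul, Real.exp_log hx]
  have hcast : (s * (T * (n + 1)) : ℝ≥0∞) = ENNReal.ofReal (s * (T * (n + 1)) : ℝ) := by
    exact_mod_cast (ENNReal.ofReal_natCast (s * (T * (n + 1)))).symm
  rw [tailBound, hexp, ← mul_assoc, hcast, ← ENNReal.ofReal_mul (by positivity)]
  refine ENNReal.ofReal_le_ofReal ?_
  have hn4 : (4 : ℝ) * n ^ 2 ≤ n ^ 4 := by nlinarith [mul_le_mul hn' hn' (by norm_num) (by linarith)]
  have hs6 : (s : ℝ) ≤ s ^ 6 := le_self_pow₀ hs' (by norm_num)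
  rw [← mul_assoc, ← div_eq_mul_inv, div_le_div_iff₀ (by positivity) (by positivity)]
  calc (s * (T * (n + 1)) * 2 * n ^ 2 : ℝ) ≤ s * (n * (n + n)) * 2 * n ^ 2 := by
        gcongr
        linarith
    _ = s * (4 * n ^ 2) * n ^ 2 := by ring
    _ ≤ s ^ 6 * n ^ 4 * n ^ 2 := by gcongr
    _ = 1 * (s * n) ^ 6 := by ring

lemma exists_keyValue_thinning_of_le {n d s t T : ℕ} (hn : n = t * 2 ^ T) (hn0 : 0 < n)
    (hs : 0 < s) {r ε : ℝ} (hε : 0 < ε)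
    (ht : 40 * Real.sqrt s * (Real.log (s * n)) ^ 2 * Real.exp (2 * r ^ 2 / Real.sqrt d) / ε ≤ t)
    {k : Fin n → EuclideanSpace ℝ (Fin d)} (hk : ∀ i, ‖k i‖ ≤ r)
    {v : Fin n → EuclideanSpace ℝ (Fin s)} (hv : ∀ i, ‖v i‖ ≤ 1) :
    ∃ μ : PMF (Finset (Fin n)), (∀ B ∈ μ.support, B.card = t) ∧
      ∀ q : EuclideanSpace ℝ (Fin d), ‖q‖ ≤ r →
        μ.toOuterMeasure {B | ε * n * Real.exp (-r ^ 2 / Real.sqrt d) <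
          ‖thinningError (fun i => Real.exp (⟪k i, q⟫ / Real.sqrt d) • v i) (2 ^ T)
            Finset.univ B‖} ≤ ENNReal.ofReal (1 / (n : ℝ) ^ 2) := by
  classical
  rcases T.eq_zero_or_pos with rfl | hT
  · refine ⟨PMF.pure Finset.univ, fun B hB => ?_, fun q _ => ?_⟩
    · simp at hB
      simpa [hB] using hn
    · rw [← PMF.lexpect_indicator_one, PMF.lexpect_pure, Set.indicator_of_notMem]
      · exact zero_le
      · simp only [thinningError, pow_zero, one_smul, sub_self, norm_zero, Set.mem_ofPred_eq,
          not_lt]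
        positivity
  have ht0 : 0 < t := Nat.pos_of_ne_zero fun h => by simp [h] at hn; omega
  have hTlt : T < 2 ^ T := Nat.lt_two_pow_self
  have hTn : T < n := by rw [hn]; nlinarith
  have hn2 : 2 ≤ n := by omega
  have hlog : Real.log 2 ≤ Real.log (s * n) := by
    refine Real.log_le_log (by norm_num) ?_
    have hs' : (1 : ℝ) ≤ s := by exact_mod_cast hs
    have hn' : (2 : ℝ) ≤ n := by exact_mod_cast hn2
    nlinarith
  have hlog2 := Real.log_two_gt_d9
  set L := Real.log (s * n) with hL
  obtain ⟨μ, hμ, htail⟩ :=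
    exists_keyValue_thinning hn (c := 12 * L) (by linarith) hk hv
  refine ⟨μ, hμ, fun q hq => le_trans (μ.toOuterMeasure.mono fun B hB => ?_)
    ((htail q hq).trans (mul_tailBound_le hn2 hs hTn.le))⟩
  simp only [Set.mem_ofPred_eq] at hB ⊢
  refine lt_of_le_of_lt ?_ hB
  set x := r ^ 2 / Real.sqrt d with hx
  have h2x : Real.exp (2 * r ^ 2 / Real.sqrt d) = Real.exp x * Real.exp x := by
    rw [← Real.exp_add, hx]
    ring_nf
  have hcast : (n : ℝ) = t * 2 ^ T := by exact_mod_cast hn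
  rw [h2x, div_le_iff₀ hε] at ht
  rw [neg_div, Real.exp_neg, ← div_eq_mul_inv, le_div_iff₀ (Real.exp_pos _), hcast]
  calc _ = 24 * L * (Real.sqrt s * (Real.exp x * Real.exp x) * 2 ^ T) := by ring
    _ ≤ 40 * L ^ 2 * (Real.sqrt s * (Real.exp x * Real.exp x) * 2 ^ T) := by
        refine mul_le_mul_of_nonneg_right ?_ (by positivity)
        nlinarith
    _ = 40 * Real.sqrt s * L ^ 2 * (Real.exp x * Real.exp x) * 2 ^ T := by ring
    _ ≤ t * ε * 2 ^ T := by gcongr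
    _ = _ := by ring

/-- The tuple of levels in which only the top level is occupied. -/
def topLevel {α : Type*} (T : ℕ) (B : Finset α) : Fin (T + 1) → Finset α :=
  fun l => if l = Fin.last T then B else ∅

lemma card_topLevel_le {α : Type*} (T : ℕ) (B : Finset α) (l : Fin (T + 1)) :
    (topLevel T B l).card ≤ B.card := by
  unfold topLevel
  split_ifs <;> simp

lemma disjoint_topLevel {α : Type*} (T : ℕ) (B : Finset α) {l l' : Fin (T + 1)} (h : l ≠ l') :
    Disjoint (topLevel T B l) (topLevel T B l') := by
  unfold topLevel
  split_ifs with h1 h2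
  · exact absurd (h1.trans h2.symm) h
  all_goals simp

lemma sum_topLevel {α E : Type*} [AddCommGroup E] [Module ℝ E] (T : ℕ) (B : Finset α)
    (f : α → E) :
    ∑ l : Fin (T + 1), (2 : ℝ) ^ (l : ℕ) • ∑ i ∈ topLevel T B l, f i =
      (2 : ℝ) ^ T • ∑ i ∈ B, f i := by
  rw [Finset.sum_eq_single (Fin.last T)]
  · simp [topLevel]
  · intro l _ hl
    simp [topLevel, hl]
  · simp

/-- MergeAndReduce guarantee (Theorem 3.4) at the end of the stream: there is an absolute
constant `c > 0` such that for keys `k_i ∈ ℝ^d` with `‖k_i‖ ≤ r` and values `v_i ∈ ℝ^s`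
(`s ≤ d`), with batch size `t = ⌈c √s (log(sn))² e^{2r²/√d}/ε⌉ ≤ n`, `n/t = 2^T`, there is a
(finitely supported) distribution over tuples `(C^0, …, C^T)` of pairwise disjoint subsets of
`[n]`, each of size at most `t`, such that for every query `q` with `‖q‖ ≤ r`, with
probability at least `1 − 1/n²`, the weighted estimator `∑_l 2^l ∑_{i ∈ C^l} e^{⟨k_i,q⟩/√d} v_i`
approximates `∑_i e^{⟨k_i,q⟩/√d} v_i` up to error `ε n e^{−r²/√d} max_i ‖v_i‖`. -/
theorem stmt_12 :
    ∃ c : ℝ, 0 < c ∧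
      ∀ (n d s : ℕ), 0 < n → 0 < d → 0 < s → s ≤ d →
        ∀ (r ε : ℝ), 0 < r → 0 < ε →
          ∀ (k : Fin n → EuclideanSpace ℝ (Fin d)), (∀ i, ‖k i‖ ≤ r) →
            ∀ (v : Fin n → EuclideanSpace ℝ (Fin s)),
              ∀ (t T : ℕ),
                t = ⌈c * Real.sqrt s * (Real.log (s * n)) ^ 2
                      * Real.exp (2 * r ^ 2 / Real.sqrt d) / ε⌉₊ →
                t ≤ n → n = t * 2 ^ T →
                  ∃ μ : PMF (Fin (T + 1) → Finset (Fin n)),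
                    (∀ Cs ∈ μ.support,
                        (∀ l, (Cs l).card ≤ t) ∧
                        ∀ l l', l ≠ l' → Disjoint (Cs l) (Cs l')) ∧
                    ∀ q : EuclideanSpace ℝ (Fin d), ‖q‖ ≤ r →
                      ENNReal.ofReal (1 - 1 / (n : ℝ) ^ 2) ≤
                        μ.toOuterMeasure {Cs : Fin (T + 1) → Finset (Fin n) |
                          ‖(∑ i : Fin n, Real.exp (⟪k i, q⟫ / Real.sqrt d) • v i)
                            - ∑ l : Fin (T + 1), (2 : ℝ) ^ (l : ℕ) •
                                ∑ i ∈ Cs l, Real.exp (⟪k i, q⟫ / Real.sqrt d) • v i‖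
                          ≤ ε * n * Real.exp (-r ^ 2 / Real.sqrt d)
                              * ⨆ i : Fin n, ‖v i‖} := by
  refine ⟨40, by norm_num, ?_⟩
  intro n d s hn0 _ hs _ r ε _ hε k hk v t T ht _ hn
  set V := ⨆ i, ‖v i‖ with hV
  have hvV : ∀ i, ‖v i‖ ≤ V := le_ciSup (Set.finite_range fun i => ‖v i‖).bddAbove
  have hV0 : 0 ≤ V := Real.iSup_nonneg fun i => norm_nonneg _
  have hv : ∀ i, ‖V⁻¹ • v i‖ ≤ 1 := fun i => by
    rw [norm_smul, norm_inv, Real.norm_of_nonneg hV0]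
    exact inv_mul_le_one_of_le₀ (hvV i) hV0
  have hscale : ∀ i, V • V⁻¹ • v i = v i := fun i => by
    rcases eq_or_ne V 0 with h | h
    · have := hvV i
      rw [h, norm_le_zero_iff] at this
      simp [this]
    · exact smul_inv_smul₀ h _
  obtain ⟨μ, hμ, htail⟩ :=
    exists_keyValue_thinning_of_le hn hn0 hs hε (ht ▸ Nat.le_ceil _) hk hv
  refine ⟨μ.map (topLevel T), fun Cs hCs => ?_, fun q hq => ?_⟩
  · obtain ⟨B, hB, rfl⟩ := (PMF.mem_support_map_iff _ _ _).1 hCs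
    exact ⟨fun l => (card_topLevel_le T B l).trans (hμ B hB).le,
      fun l l' h => disjoint_topLevel T B h⟩
  · rw [PMF.toOuterMeasure_map_apply]
    refine le_trans ?_ (PMF.one_sub_toOuterMeasure_compl_le _ _)
    rw [ENNReal.ofReal_sub _ (by positivity), ENNReal.ofReal_one]
    refine tsub_le_tsub_left (le_trans (μ.toOuterMeasure.mono fun B hB => ?_) (htail q hq)) _
    simp only [Set.mem_compl_iff, Set.mem_preimage, Set.mem_ofPred_eq, not_le, sum_topLevel]
      at hB ⊢
    have herr : ∑ i, Real.exp (⟪k i, q⟫ / Real.sqrt d) • v i -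
        (2 : ℝ) ^ T • ∑ i ∈ B, Real.exp (⟪k i, q⟫ / Real.sqrt d) • v i =
        V • thinningError (fun i => Real.exp (⟪k i, q⟫ / Real.sqrt d) • V⁻¹ • v i) (2 ^ T)
          Finset.univ B := by
      have hw : ∀ i, Real.exp (⟪k i, q⟫ / Real.sqrt d) • v i =
          V • Real.exp (⟪k i, q⟫ / Real.sqrt d) • V⁻¹ • v i := fun i => by
        rw [smul_comm V, hscale]
      simp only [hw, thinningError, ← Finset.smul_sum, smul_sub, smul_comm V ((2 : ℝ) ^ T)]
    rw [herr, norm_smul, Real.norm_of_nonneg hV0, mul_comm V] at hB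
    exact lt_of_mul_lt_mul_right hB hV0
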